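/- For any y ∈ W, X^1_y = δ_{y,y*} u^{l(y)}. Equivalently, the coefficient of a_1 in T_y a_1 (in the Lusztig–Vogan module) equals u^{l(y)} if y = y* and 0 otherwise. -/

import Mathlib

open Polynomial
open scoped Classical

/-- The characterization (Proposition 1.2) of the polynomials `X^z_y ∈ ℤ[u]`, indexed by pairs
`(z, y)` with `z` a twisted involution (`st z = z⁻¹`) and `y ∈ W`: `X^z_1 = δ_{z,1}`, and for
`s ∈ S`, `y > ys`, the recursions 1.2(i)–(iv) hold. -/
def XRec {B W : Type} [Group W] {M : CoxeterMatrix B} (cs : CoxeterSystem M W)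
    (st : W ≃* W) (P : {z : W // st z = z⁻¹} → W → Polynomial ℤ) : Prop :=
  (∀ z : {z : W // st z = z⁻¹}, P z 1 = if z.1 = 1 then 1 else 0) ∧
  ∀ (i : B) (y : W), cs.length (y * cs.simple i) < cs.length y →
    ∀ z : {z : W // st z = z⁻¹},
      (cs.simple i * z.1 = z.1 * st (cs.simple i) →
        cs.length z.1 < cs.length (cs.simple i * z.1) →
        ∀ h : st (cs.simple i * z.1) = (cs.simple i * z.1)⁻¹,
          P z y = X * P z (y * cs.simple i) +
            (X + 1) * P ⟨cs.simple i * z.1, h⟩ (y * cs.simple i)) ∧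
      (cs.simple i * z.1 = z.1 * st (cs.simple i) →
        cs.length (cs.simple i * z.1) < cs.length z.1 →
        ∀ h : st (cs.simple i * z.1) = (cs.simple i * z.1)⁻¹,
          P z y = (X ^ 2 - X - 1) * P z (y * cs.simple i) +
            (X ^ 2 - X) * P ⟨cs.simple i * z.1, h⟩ (y * cs.simple i)) ∧
      (cs.simple i * z.1 ≠ z.1 * st (cs.simple i) →
        cs.length z.1 < cs.length (cs.simple i * z.1) →
        ∀ h : st (cs.simple i * z.1 * st (cs.simple i)) =
            (cs.simple i * z.1 * st (cs.simple i))⁻¹,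
          P z y = P ⟨cs.simple i * z.1 * st (cs.simple i), h⟩ (y * cs.simple i)) ∧
      (cs.simple i * z.1 ≠ z.1 * st (cs.simple i) →
        cs.length (cs.simple i * z.1) < cs.length z.1 →
        ∀ h : st (cs.simple i * z.1 * st (cs.simple i)) =
            (cs.simple i * z.1 * st (cs.simple i))⁻¹,
          P z y = (X ^ 2 - 1) * P z (y * cs.simple i) +
            X ^ 2 * P ⟨cs.simple i * z.1 * st (cs.simple i), h⟩ (y * cs.simple i))

namespace LV
variable {B W : Type} [Group W] {M : CoxeterMatrix B} (cs : CoxeterSystem M W)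

/-- signed conjugation by a simple reflection -/
noncomputable def sg (i : B) : Function.End (W × ZMod 2) :=
  fun p => (cs.simple i * p.1 * cs.simple i, p.2 + if p.1 = cs.simple i then 1 else 0)

lemma dih_right {s t : W} (hs : s * s = 1) (ht : t * t = 1) (n : ℕ) :
    t * (s * t) ^ n = ((s * t) ^ n)⁻¹ * t := by
  have hs' : s⁻¹ = s := inv_eq_of_mul_eq_one_left hs
  have ht' : t⁻¹ = t := inv_eq_of_mul_eq_one_left ht
  have h : t * (s * t) * t⁻¹ = (s * t)⁻¹ := by
    simp [mul_assoc, hs', ht', ht]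
  have h2 := conj_pow (a := t) (b := s * t) (i := n)
  rw [h, inv_pow] at h2
  rw [h2]; simp

lemma dih_left {s t : W} (hs : s * s = 1) (ht : t * t = 1) (n : ℕ) :
    s * (s * t) ^ n = ((s * t) ^ n)⁻¹ * s := by
  have hs' : s⁻¹ = s := inv_eq_of_mul_eq_one_left hs
  have ht' : t⁻¹ = t := inv_eq_of_mul_eq_one_left ht
  have h : s * (s * t) * s⁻¹ = (s * t)⁻¹ := by
    rw [mul_inv_rev, hs', ht', ← mul_assoc, hs, one_mul]
  have h2 := conj_pow (a := s) (b := s * t) (i := n)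
  rw [h, inv_pow] at h2
  rw [h2]; simp

lemma sg_apply (i : B) (t : W) (e : ZMod 2) : sg cs i (t, e) =
    (cs.simple i * t * cs.simple i, e + if t = cs.simple i then 1 else 0) := rfl

lemma sg_pow (i j : B) (m : ℕ) (t : W) (e : ZMod 2) :
    ((sg cs i * sg cs j) ^ m) (t, e) =
      ((cs.simple i * cs.simple j) ^ m * t * ((cs.simple i * cs.simple j) ^ m)⁻¹,
        e + ∑ n ∈ Finset.range (2 * m),
          if (cs.simple i * cs.simple j) ^ n * t = cs.simple j then 1 else 0) := by
  induction m with
  | zero => simp; rfl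
  | succ m ih =>
    have hc := dih_right (cs.simple_mul_simple_self i) (cs.simple_mul_simple_self j)
    rw [pow_succ']
    change sg cs i (sg cs j (((sg cs i * sg cs j) ^ m) (t, e))) = _
    rw [ih, sg_apply, sg_apply]
    have e1 : ((cs.simple i * cs.simple j) ^ m * t * ((cs.simple i * cs.simple j) ^ m)⁻¹
        = cs.simple j) ↔ (cs.simple i * cs.simple j) ^ (2 * m) * t = cs.simple j := by
      rw [mul_inv_eq_iff_eq_mul, hc, eq_inv_mul_iff_mul_eq, ← mul_assoc, ← pow_add, two_mul]
    have e2 : (cs.simple j * ((cs.simple i * cs.simple j) ^ m * t *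
        ((cs.simple i * cs.simple j) ^ m)⁻¹) * cs.simple j
        = cs.simple i) ↔ (cs.simple i * cs.simple j) ^ (2 * m + 1) * t = cs.simple j := by
      have h3 : (2 * m + 1) = m + 1 + m := by ring
      have h4 : ∀ x : W, cs.simple j * x * cs.simple j = cs.simple i ↔
          cs.simple i * cs.simple j * x = cs.simple j := by
        intro x
        constructor
        · intro h
          have h5 : x = cs.simple j * cs.simple i * cs.simple j := by
            rw [← h]; simp [mul_assoc]
          rw [h5]; simp [mul_assoc]
        · intro h
          have h5 : x = cs.simple j * cs.simple i * cs.simple j := by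
            conv_rhs => rw [mul_assoc]
            conv_rhs => rw [← h]
            conv_rhs => rw [h]
            conv_rhs => arg 2; arg 2; rw [← h]
            simp [mul_assoc]
          rw [h5]; simp [mul_assoc]
      rw [h4, h3, pow_add, pow_succ', ← mul_assoc, mul_inv_eq_iff_eq_mul, hc,
        eq_inv_mul_iff_mul_eq]
      have h6 : (cs.simple i * cs.simple j) ^ m * (cs.simple i * cs.simple j) =
        cs.simple i * cs.simple j * (cs.simple i * cs.simple j) ^ m := by
          rw [← pow_succ, pow_succ']
      rw [← mul_assoc, ← mul_assoc, h6]
    simp only [e2, e1]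
    rw [show 2 * (m + 1) = 2 * m + 1 + 1 by ring, Finset.sum_range_succ, Finset.sum_range_succ]
    refine Prod.ext ?_ ?_
    · simp [pow_succ', mul_assoc]
    · simp only [add_assoc]

lemma sg_liftable : M.IsLiftable (sg cs) := by
  intro i j
  funext ⟨t, e⟩
  rw [sg_pow]
  have h := cs.simple_mul_simple_pow i j
  rw [h, two_mul, Finset.sum_range_add]
  simp only [pow_add, h, one_mul]
  rw [CharTwo.add_self_eq_zero]
  simp
  rfl

/-- the signed permutation action -/
noncomputable def Phi : W →* Function.End (W × ZMod 2) := cs.lift ⟨sg cs, sg_liftable cs⟩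

lemma Phi_simple (i : B) : Phi cs (cs.simple i) = sg cs i :=
  cs.lift_apply_simple (sg_liftable cs) i

lemma Phi_word (ω : List B) (t : W) (e : ZMod 2) :
    Phi cs (cs.wordProd ω) (t, e) =
      (cs.wordProd ω * t * (cs.wordProd ω)⁻¹, e + ((cs.rightInvSeq ω).count t : ℕ)) := by
  induction ω with
  | nil => simp; rfl
  | cons i ω ih =>
    rw [CoxeterSystem.wordProd_cons, map_mul]
    change Phi cs (cs.simple i) (Phi cs (cs.wordProd ω) (t, e)) = _
    rw [ih, Phi_simple, sg_apply]
    simp only [CoxeterSystem.rightInvSeq, List.count_cons]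
    have : (cs.wordProd ω * t * (cs.wordProd ω)⁻¹ = cs.simple i) ↔
      ((cs.wordProd ω)⁻¹ * cs.simple i * cs.wordProd ω = t) := by
      constructor
      · intro h; rw [← h]; group
      · intro h; rw [← h]; group
    simp only [this, beq_iff_eq]
    refine Prod.ext ?_ ?_
    · simp [mul_assoc]
    · simp [add_assoc]

lemma exchange (ω : List B) (i : B)
    (h : cs.length (cs.wordProd ω * cs.simple i) < cs.length (cs.wordProd ω)) :
    ∃ k < ω.length, cs.wordProd ω * cs.simple i = cs.wordProd (ω.eraseIdx k) := by
  have hmem : cs.simple i ∈ cs.rightInvSeq ω := by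
    by_contra hn
    obtain ⟨ρ, hρ, hρ'⟩ := cs.exists_isReduced (cs.wordProd ω * cs.simple i)
    have h1 := Phi_word cs ρ (cs.simple i) 0
    rw [← hρ', map_mul] at h1
    change Phi cs (cs.wordProd ω) (Phi cs (cs.simple i) (cs.simple i, 0)) = _ at h1
    rw [Phi_simple, sg_apply, cs.simple_mul_simple_self, one_mul] at h1
    rw [Phi_word, List.count_eq_zero_of_not_mem hn] at h1
    have h2 := congrArg Prod.snd h1
    simp at h2
    have h3 : cs.simple i ∈ cs.rightInvSeq ρ := by
      by_contra h4
      rw [List.count_eq_zero_of_not_mem h4] at h2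
      simp at h2
    have h5 := (cs.isRightInversion_of_mem_rightInvSeq hρ h3).2
    rw [← hρ'] at h5
    simp at h5
    omega
  obtain ⟨k, hk, hk'⟩ := List.mem_iff_getElem.mp hmem
  refine ⟨k, by simpa using hk, ?_⟩
  rw [← cs.wordProd_mul_getD_rightInvSeq, List.getD_eq_getElem _ _ hk, hk']

/-- exchange for a product of two words -/
lemma exchange2 (ω ρ : List B) (i : B)
    (h : cs.length (cs.wordProd ω * cs.wordProd ρ * cs.simple i)
      < cs.length (cs.wordProd ω * cs.wordProd ρ)) :
    (∃ ω' : List B, ω'.Sublist ω ∧ ω'.length < ω.length ∧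
      cs.wordProd ω * cs.wordProd ρ * cs.simple i = cs.wordProd ω' * cs.wordProd ρ) ∨
    (∃ ρ' : List B, ρ'.Sublist ρ ∧ ρ'.length < ρ.length ∧
      cs.wordProd ρ * cs.simple i = cs.wordProd ρ') := by
  rw [← CoxeterSystem.wordProd_append] at h
  obtain ⟨k, hk, hk'⟩ := exchange cs _ i h
  rw [CoxeterSystem.wordProd_append] at hk'
  by_cases hkω : k < ω.length
  · left
    rw [List.eraseIdx_append_of_lt_length hkω, CoxeterSystem.wordProd_append] at hk'
    refine ⟨_, List.eraseIdx_sublist _ _, ?_, hk'⟩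
    have := List.length_eraseIdx_add_one hkω
    omega
  · right
    rw [List.eraseIdx_append_of_length_le (by omega), CoxeterSystem.wordProd_append, mul_assoc] at hk'
    refine ⟨_, List.eraseIdx_sublist _ _, ?_, mul_left_cancel hk'⟩
    rw [List.length_append] at hk
    have := List.length_eraseIdx_add_one (l := ρ) (i := k - ω.length) (by omega)
    omega


lemma add_len (J : Set B) (u : W)
    (hu : ∀ κ : List B, (∀ k ∈ κ, k ∈ J) → cs.length u ≤ cs.length (u * cs.wordProd κ))
    (κ : List B) : (∀ k ∈ κ, k ∈ J) →
    (∀ κ' : List B, (∀ k ∈ κ', k ∈ J) → cs.wordProd κ' = cs.wordProd κ → κ.length ≤ κ'.length) →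
    cs.length (u * cs.wordProd κ) = cs.length u + κ.length := by
  induction κ using List.reverseRecOn with
  | nil => simp
  | append_singleton κ j ih =>
    intro hJ hmin
    have hJ' : ∀ k ∈ κ, k ∈ J := fun k hk => hJ k (by simp [hk])
    have hj : j ∈ J := hJ j (by simp)
    have ih' := ih hJ' (by
      intro κ' h1 h2
      have := hmin (κ' ++ [j]) (by
        intro k hk
        rw [List.mem_append] at hk
        rcases hk with hk | hk
        · exact h1 k hk
        · simp at hk; rwa [hk]) (by simp [CoxeterSystem.wordProd_append, h2])
      simpa using this)
    rw [CoxeterSystem.wordProd_append, CoxeterSystem.wordProd_singleton, ← mul_assoc,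
      List.length_append, List.length_singleton]
    rcases cs.length_mul_simple (u * cs.wordProd κ) j with h | h
    · omega
    exfalso
    obtain ⟨ρ, hρ, hρ'⟩ := cs.exists_isReduced u
    have h1 := exchange2 cs ρ κ j (by rw [← hρ']; omega)
    rcases h1 with ⟨ρ', -, h2, h3⟩ | ⟨κ', h2, h3, h4⟩
    · have h5 := hu (κ ++ [j] ++ κ.reverse) (by
        intro k hk
        simp at hk
        rcases hk with hk | hk | hk
        · exact hJ' k hk
        · rwa [hk]
        · exact hJ' k hk)
      have h6 : u * cs.wordProd (κ ++ [j] ++ κ.reverse) = cs.wordProd ρ' := by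
        rw [← hρ'] at h3
        simp only [CoxeterSystem.wordProd_append, CoxeterSystem.wordProd_reverse,
          CoxeterSystem.wordProd_singleton]
        rw [← mul_assoc, ← mul_assoc, h3]
        simp
      rw [h6] at h5
      have := cs.length_wordProd_le ρ'
      have := hρ.eq
      rw [← hρ'] at this
      omega
    · have := hmin κ' (fun k hk => hJ' k (h2.subset hk)) (by
        simp [CoxeterSystem.wordProd_append, h4])
      simp at this
      omega

lemma exists_min_word (J : Set B) (κ : List B) (hκ : ∀ k ∈ κ, k ∈ J) :
    ∃ κ₁ : List B, (∀ k ∈ κ₁, k ∈ J) ∧ cs.wordProd κ₁ = cs.wordProd κ ∧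
    (∀ κ' : List B, (∀ k ∈ κ', k ∈ J) → cs.wordProd κ' = cs.wordProd κ₁ →
      κ₁.length ≤ κ'.length) := by
  have hex : ∃ n : ℕ, ∃ κ₁ : List B, (∀ k ∈ κ₁, k ∈ J) ∧ cs.wordProd κ₁ = cs.wordProd κ ∧
    κ₁.length = n := ⟨_, κ, hκ, rfl, rfl⟩
  obtain ⟨κ₁, h1, h2, h3⟩ := Nat.find_spec hex
  refine ⟨κ₁, h1, h2, ?_⟩
  intro κ' h4 h5
  rw [h3]
  exact Nat.find_min' hex ⟨κ', h4, by rw [h5, h2], rfl⟩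

lemma min_coset (J : Set B) (v : W) (hv : ∀ j ∈ J, cs.length v < cs.length (v * cs.simple j))
    (κ : List B) (hκ : ∀ k ∈ κ, k ∈ J) (hne : cs.wordProd κ ≠ 1) :
    cs.length v < cs.length (v * cs.wordProd κ) := by
  have hex : ∃ n : ℕ, ∃ κ₁ : List B, (∀ k ∈ κ₁, k ∈ J) ∧
      cs.length (v * cs.wordProd κ₁) = n := ⟨_, κ, hκ, rfl⟩
  obtain ⟨κ₀, h1, h2⟩ := Nat.find_spec hex
  have hu : ∀ κ' : List B, (∀ k ∈ κ', k ∈ J) →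
      cs.length (v * cs.wordProd κ₀) ≤ cs.length (v * cs.wordProd κ₀ * cs.wordProd κ') := by
    intro κ' h3
    rw [h2]
    refine Nat.find_min' hex ⟨κ₀ ++ κ', ?_, by rw [CoxeterSystem.wordProd_append, mul_assoc]⟩
    intro k hk
    rw [List.mem_append] at hk
    exact hk.elim (h1 k) (h3 k)
  obtain ⟨κ₁, g1, g2, g3⟩ := exists_min_word cs J κ₀.reverse (fun k hk => h1 k (by simpa using hk))
  have g4 := add_len cs J _ hu κ₁ g1 g3
  rw [g2, CoxeterSystem.wordProd_reverse, mul_inv_cancel_right] at g4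
  have hnil : κ₁ = [] := by
    rcases List.eq_nil_or_concat κ₁ with h | ⟨κ₂, j, h⟩
    · exact h
    exfalso
    rw [List.concat_eq_append] at h
    subst h
    have hj : j ∈ J := g1 j (by simp)
    have h5 := hv j hj
    have h6 : v * cs.simple j = v * cs.wordProd κ₀ * cs.wordProd κ₂ := by
      rw [CoxeterSystem.wordProd_append, CoxeterSystem.wordProd_reverse,
        CoxeterSystem.wordProd_singleton] at g2
      have : cs.wordProd κ₂ = (cs.wordProd κ₀)⁻¹ * cs.simple j := by
        rw [← g2]; simp
      rw [this]; group
    rw [h6] at h5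
    have h7 := cs.length_mul_le (v * cs.wordProd κ₀) (cs.wordProd κ₂)
    have h8 := cs.length_wordProd_le κ₂
    simp at g4
    omega
  have hκ0 : cs.wordProd κ₀ = 1 := by
    rw [hnil] at g2
    simpa using g2.symm
  rw [hκ0, mul_one] at hu
  obtain ⟨κ₃, f1, f2, f3⟩ := exists_min_word cs J κ hκ
  have f4 := add_len cs J _ hu κ₃ f1 f3
  rw [f2] at f4
  rw [f4]
  have : κ₃ ≠ [] := by
    rintro rfl
    simp at f2
    exact hne f2.symm
  have := List.length_pos_iff.mpr this
  omega

lemma length_st (st : W ≃* W) (hst_inv : ∀ w, st (st w) = w)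
    (hst_S : ∀ i : B, ∃ j : B, st (cs.simple i) = cs.simple j) (w : W) :
    cs.length (st w) = cs.length w := by
  choose τ hτ using hst_S
  have h1 : ∀ ω : List B, st (cs.wordProd ω) = cs.wordProd (ω.map τ) := by
    intro ω
    induction ω with
    | nil => simp
    | cons i ω ih => simp [CoxeterSystem.wordProd_cons, ih, hτ]
  have h2 : ∀ w, cs.length (st w) ≤ cs.length w := by
    intro w
    obtain ⟨ω, hω, rfl⟩ := cs.exists_isReduced w
    rw [h1, hω.eq]
    simpa using cs.length_wordProd_le (ω.map τ)
  have h3 := h2 (st w)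
  rw [hst_inv] at h3
  exact le_antisymm (h2 w) h3

lemma tw_conj (st : W ≃* W) (hst_inv : ∀ w, st (st w) = w) (i : B) (z : W) (hz : st z = z⁻¹) :
    st (cs.simple i * z * st (cs.simple i)) = (cs.simple i * z * st (cs.simple i))⁻¹ := by
  have : (st (cs.simple i))⁻¹ = st (cs.simple i) := by rw [← map_inv, CoxeterSystem.inv_simple]
  simp [hst_inv, hz, mul_assoc, this]

lemma tw_comm (st : W ≃* W) (i : B) (z : W) (hz : st z = z⁻¹)
    (hc : cs.simple i * z = z * st (cs.simple i)) :
    st (cs.simple i * z) = (cs.simple i * z)⁻¹ := by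
  have : (st (cs.simple i))⁻¹ = st (cs.simple i) := by rw [← map_inv, CoxeterSystem.inv_simple]
  conv_rhs => rw [hc]
  simp [hz, this]

lemma step (st : W ≃* W) (hst_inv : ∀ w, st (st w) = w)
    (P : {z : W // st z = z⁻¹} → W → Polynomial ℤ) (hP : XRec cs st P)
    (i : B) (y : W) (hy : cs.length (y * cs.simple i) < cs.length y)
    (z : W) (hz : st z = z⁻¹) (hne : P ⟨z, hz⟩ y ≠ 0) :
    (cs.simple i * z = z * st (cs.simple i) ∧ P ⟨z, hz⟩ (y * cs.simple i) ≠ 0) ∨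
    (cs.simple i * z = z * st (cs.simple i) ∧ ∃ h, P ⟨cs.simple i * z, h⟩ (y * cs.simple i) ≠ 0) ∨
    (∃ h, P ⟨cs.simple i * z * st (cs.simple i), h⟩ (y * cs.simple i) ≠ 0) ∨
    (cs.length (cs.simple i * z) < cs.length z ∧ P ⟨z, hz⟩ (y * cs.simple i) ≠ 0) := by
  obtain ⟨r1, r2, r3, r4⟩ := hP.2 i y hy ⟨z, hz⟩
  simp only at r1 r2 r3 r4
  by_contra hcon
  push Not at hcon
  obtain ⟨c1, c2, c3, c4⟩ := hcon
  apply hne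
  have hlen := cs.length_simple_mul z i
  by_cases hc : cs.simple i * z = z * st (cs.simple i)
  · have h := tw_comm cs st i z hz hc
    rcases hlen with hl | hl
    · rw [r1 hc (by omega) h, c1 hc, c2 hc h]; simp
    · rw [r2 hc (by omega) h, c1 hc, c2 hc h]; simp
  · have h := tw_conj cs st hst_inv i z hz
    rcases hlen with hl | hl
    · rw [r3 hc (by omega) h, c3 h]
    · rw [r4 hc (by omega) h, c3 h, c4 (by omega)]; simp

lemma supp (st : W ≃* W) (hst_inv : ∀ w, st (st w) = w)
    (hst_S : ∀ i : B, ∃ j : B, st (cs.simple i) = cs.simple j)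
    (P : {z : W // st z = z⁻¹} → W → Polynomial ℤ) (hP : XRec cs st P) (ω : List B) :
    cs.IsReduced ω → ∀ (z : W) (hz : st z = z⁻¹), P ⟨z, hz⟩ (cs.wordProd ω) ≠ 0 →
    ∃ σ : List B, σ.Sublist ω ∧ z = (cs.wordProd σ)⁻¹ * st (cs.wordProd ω) := by
  induction ω using List.reverseRecOn with
  | nil =>
    intro _ z hz hne
    rw [CoxeterSystem.wordProd_nil, hP.1] at hne
    refine ⟨[], List.Sublist.refl _, ?_⟩
    by_contra h
    simp at h
    simp [h] at hne
  | append_singleton ω i ih =>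
    intro hred z hz hne
    have hred' : cs.IsReduced ω := by
      have := hred.take ω.length
      simpa using this
    have hw : cs.wordProd (ω ++ [i]) = cs.wordProd ω * cs.simple i := by
      simp [CoxeterSystem.wordProd_append]
    have hyx : cs.wordProd (ω ++ [i]) * cs.simple i = cs.wordProd ω := by rw [hw]; simp
    have hlt : cs.length (cs.wordProd ω) < cs.length (cs.wordProd ω * cs.simple i) := by
      rw [← hw, hred.eq, hred'.eq]; simp
    have hss : st (cs.simple i) * st (cs.simple i) = 1 := by rw [← map_mul]; simp
    have hst := step cs st hst_inv P hP i (cs.wordProd (ω ++ [i])) (by rw [hyx, hw]; exact hlt)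
      z hz hne
    rw [hyx] at hst
    rw [hw, map_mul]
    rcases hst with ⟨hc, h⟩ | ⟨hc, h, h'⟩ | ⟨h, h'⟩ | ⟨hc, h⟩
    · obtain ⟨σ, h1, h2⟩ := ih hred' z hz h
      refine ⟨σ ++ [i], h1.append (List.Sublist.refl _), ?_⟩
      rw [CoxeterSystem.wordProd_append, CoxeterSystem.wordProd_singleton, mul_inv_rev,
        CoxeterSystem.inv_simple, mul_assoc, ← mul_assoc _ (st (cs.wordProd ω)), ← h2, ← hc]
      simp
    · obtain ⟨σ, h1, h2⟩ := ih hred' _ h h'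
      refine ⟨σ, h1.trans (List.sublist_append_left _ _), ?_⟩
      rw [← mul_assoc, ← h2, hc, mul_assoc, hss, mul_one]
    · obtain ⟨σ, h1, h2⟩ := ih hred' _ h h'
      refine ⟨σ ++ [i], h1.append (List.Sublist.refl _), ?_⟩
      rw [CoxeterSystem.wordProd_append, CoxeterSystem.wordProd_singleton, mul_inv_rev,
        CoxeterSystem.inv_simple, mul_assoc, ← mul_assoc _ (st (cs.wordProd ω)), ← h2]
      rw [mul_assoc (cs.simple i * z), hss]
      simp
    · obtain ⟨σ, h1, h2⟩ := ih hred' z hz h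
      obtain ⟨j, hj⟩ := hst_S i
      obtain ⟨ρ, hρ, hρ'⟩ := cs.exists_isReduced (st (cs.wordProd ω))
      have hls := length_st cs st hst_inv hst_S
      have hz2 : z = cs.wordProd σ.reverse * cs.wordProd ρ := by
        rw [CoxeterSystem.wordProd_reverse, ← hρ']; exact h2
      have hex := exchange2 cs σ.reverse ρ j (by
        rw [← hz2, ← hls (z * cs.simple j), map_mul, hz, ← hj, hst_inv, ← cs.length_inv,
          mul_inv_rev, inv_inv, CoxeterSystem.inv_simple]
        exact hc)
      rcases hex with ⟨σ', k1, k2, k3⟩ | ⟨ρ', k1, k2, k3⟩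
      · rw [← hz2] at k3
        refine ⟨σ'.reverse, ?_, ?_⟩
        · have : σ'.reverse.Sublist σ := by
            have := k1.reverse
            simpa using this
          exact (this.trans h1).trans (List.sublist_append_left _ _)
        · rw [CoxeterSystem.wordProd_reverse, inv_inv, hρ', ← mul_assoc, ← k3, hj]
          simp
      · exfalso
        rw [← hρ', ← hj, ← map_mul] at k3
        have e1 := hls (cs.wordProd ω * cs.simple i)
        rw [k3] at e1
        have e2 := cs.length_wordProd_le ρ'
        have e3 := hρ.eq
        rw [← hρ', hls] at e3
        omega

lemma supp_len (st : W ≃* W) (hst_inv : ∀ w, st (st w) = w)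
    (hst_S : ∀ i : B, ∃ j : B, st (cs.simple i) = cs.simple j)
    (P : {z : W // st z = z⁻¹} → W → Polynomial ℤ) (hP : XRec cs st P) (y z : W)
    (hz : st z = z⁻¹) (hne : P ⟨z, hz⟩ y ≠ 0) :
    cs.length (z * (st y)⁻¹) < cs.length y ∨ z = y⁻¹ * st y := by
  obtain ⟨ω, hω, rfl⟩ := cs.exists_isReduced y
  obtain ⟨σ, h1, h2⟩ := supp cs st hst_inv hst_S P hP ω hω z hz hne
  rcases h1.length_le.eq_or_lt with h | h
  · right
    rw [← h1.eq_of_length h]; rw [← h1.eq_of_length h] at h2; exact h2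
  · left
    rw [h2, mul_inv_cancel_right, CoxeterSystem.length_inv, hω.eq]
    exact lt_of_le_of_lt (cs.length_wordProd_le σ) h

/-- alternating index sequence `i, j, i, j, …` -/
def rr (i j : B) (k : ℕ) : B := if k % 2 = 0 then i else j

/-- alternating products `1, s, st, sts, …` -/
def qq (i j : B) : ℕ → W
  | 0 => 1
  | k + 1 => qq i j k * cs.simple (rr i j k)

lemma qq_succ (i j : B) (k : ℕ) : qq cs i j (k + 1) = qq cs i j k * cs.simple (rr i j k) := rfl

lemma rr_even (i j : B) {k : ℕ} (h : k % 2 = 0) : rr i j k = i := by simp [rr, h]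

lemma rr_odd (i j : B) {k : ℕ} (h : k % 2 = 1) : rr i j k = j := by simp [rr, h]

lemma qq_even (i j : B) (p : ℕ) : qq cs i j (2 * p) = (cs.simple i * cs.simple j) ^ p := by
  induction p with
  | zero => simp [qq]
  | succ p ih =>
    rw [show 2 * (p + 1) = 2 * p + 1 + 1 by ring, qq_succ, qq_succ, ih,
      rr_even i j (by omega), rr_odd i j (by omega), pow_succ, mul_assoc]

lemma qq_odd (i j : B) (p : ℕ) :
    qq cs i j (2 * p + 1) = (cs.simple i * cs.simple j) ^ p * cs.simple i := by
  rw [qq_succ, qq_even, rr_even i j (by omega)]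

lemma st_rr (st : W ≃* W) (hst_inv : ∀ w, st (st w) = w) (i j : B)
    (hij : st (cs.simple i) = cs.simple j) (k : ℕ) :
    st (cs.simple (rr i j k)) = cs.simple (rr i j (k + 1)) := by
  rcases Nat.mod_two_eq_zero_or_one k with h | h
  · rw [rr_even i j h, rr_odd i j (by omega), hij]
  · rw [rr_odd i j h, rr_even i j (by omega), ← hij, hst_inv]

lemma length_qq_le (i j : B) (k : ℕ) : cs.length (qq cs i j k) ≤ k := by
  induction k with
  | zero => simp [qq]
  | succ k ih =>
    rw [qq_succ]
    have := cs.length_mul_le (qq cs i j k) (cs.simple (rr i j k))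
    rw [cs.length_simple] at this
    omega

/-- the twisted involutions `z_k` -/
def zz (st : W ≃* W) (i j : B) (k : ℕ) : W := (qq cs i j k)⁻¹ * st (qq cs i j k)

lemma zz_succ (st : W ≃* W) (i j : B) (k : ℕ) : zz cs st i j (k + 1) =
    cs.simple (rr i j k) * zz cs st i j k * st (cs.simple (rr i j k)) := by
  simp [zz, qq_succ, mul_assoc]

lemma zz_tw (st : W ≃* W) (hst_inv : ∀ w, st (st w) = w) (i j : B) (k : ℕ) :
    st (zz cs st i j k) = (zz cs st i j k)⁻¹ := by
  simp [zz, hst_inv]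

lemma st_a (st : W ≃* W) (hst_inv : ∀ w, st (st w) = w) (i j : B)
    (hij : st (cs.simple i) = cs.simple j) (p : ℕ) :
    st ((cs.simple i * cs.simple j) ^ p) = ((cs.simple i * cs.simple j) ^ p)⁻¹ := by
  have hji : st (cs.simple j) = cs.simple i := by rw [← hij, hst_inv]
  rw [map_pow, map_mul, hij, hji, ← inv_pow, mul_inv_rev, CoxeterSystem.inv_simple,
    CoxeterSystem.inv_simple]

lemma dih_left' (i j : B) (p : ℕ) : cs.simple i * ((cs.simple i * cs.simple j) ^ p)⁻¹ =
    (cs.simple i * cs.simple j) ^ p * cs.simple i := by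
  rw [mul_inv_eq_iff_eq_mul, mul_assoc,
    dih_left (cs.simple_mul_simple_self i) (cs.simple_mul_simple_self j)]
  simp

lemma zz_even (st : W ≃* W) (hst_inv : ∀ w, st (st w) = w) (i j : B)
    (hij : st (cs.simple i) = cs.simple j) {k : ℕ} (hk : k % 2 = 0) :
    zz cs st i j k = ((cs.simple i * cs.simple j) ^ k)⁻¹ := by
  obtain ⟨p, rfl⟩ : ∃ p, k = 2 * p := ⟨k / 2, by omega⟩
  rw [zz, qq_even, st_a cs st hst_inv i j hij, ← mul_inv_rev, ← pow_add, two_mul]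

lemma zz_odd (st : W ≃* W) (hst_inv : ∀ w, st (st w) = w) (i j : B)
    (hij : st (cs.simple i) = cs.simple j) {k : ℕ} (hk : k % 2 = 1) :
    zz cs st i j k = (cs.simple i * cs.simple j) ^ k := by
  obtain ⟨p, rfl⟩ : ∃ p, k = 2 * p + 1 := ⟨k / 2, by omega⟩
  rw [zz, qq_odd, map_mul, st_a cs st hst_inv i j hij, hij, mul_inv_rev, CoxeterSystem.inv_simple,
    dih_left', pow_succ, two_mul, pow_add]
  simp only [mul_assoc]
  rw [← mul_assoc (cs.simple i) _ (cs.simple j), dih_left']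
  simp only [mul_assoc]

lemma zz_eq_one (st : W ≃* W) (hst_inv : ∀ w, st (st w) = w) (i j : B)
    (hij : st (cs.simple i) = cs.simple j) (k : ℕ) :
    zz cs st i j k = 1 ↔ (cs.simple i * cs.simple j) ^ k = 1 := by
  rcases Nat.mod_two_eq_zero_or_one k with h | h
  · rw [zz_even cs st hst_inv i j hij h, inv_eq_one]
  · rw [zz_odd cs st hst_inv i j hij h]

lemma zz_len (st : W ≃* W) (hst_inv : ∀ w, st (st w) = w) (i j : B)
    (hij : st (cs.simple i) = cs.simple j) (k : ℕ) :
    cs.length (zz cs st i j k) = cs.length (qq cs i j (2 * k)) := by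
  rw [qq_even]
  rcases Nat.mod_two_eq_zero_or_one k with h | h
  · rw [zz_even cs st hst_inv i j hij h, CoxeterSystem.length_inv]
  · rw [zz_odd cs st hst_inv i j hij h]

lemma rzz_len (st : W ≃* W) (hst_inv : ∀ w, st (st w) = w)
    (hst_S : ∀ i : B, ∃ j : B, st (cs.simple i) = cs.simple j) (i j : B)
    (hij : st (cs.simple i) = cs.simple j) (k : ℕ) :
    cs.length (cs.simple (rr i j k) * zz cs st i j k) = cs.length (qq cs i j (2 * k + 1)) := by
  rw [qq_odd]
  rcases Nat.mod_two_eq_zero_or_one k with h | h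
  · rw [zz_even cs st hst_inv i j hij h, rr_even i j h, dih_left']
  · rw [zz_odd cs st hst_inv i j hij h, rr_odd i j h, ← dih_left',
      ← length_st cs st hst_inv hst_S (_ * _), map_mul, ← hij, hst_inv, hij, map_pow, map_mul]
    rw [← hij, hst_inv, ← inv_pow, mul_inv_rev, hij, CoxeterSystem.inv_simple,
      CoxeterSystem.inv_simple]

lemma zz_comm (st : W ≃* W) (hst_inv : ∀ w, st (st w) = w) (i j : B)
    (hij : st (cs.simple i) = cs.simple j) (k : ℕ) :
    cs.simple (rr i j k) * zz cs st i j k = zz cs st i j k * st (cs.simple (rr i j k)) ↔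
      (cs.simple i * cs.simple j) ^ (2 * k + 1) = 1 := by
  have hss : (st (cs.simple (rr i j k)))⁻¹ = st (cs.simple (rr i j k)) := by
    rw [← map_inv, CoxeterSystem.inv_simple]
  have h1 : cs.simple (rr i j k) * zz cs st i j k = zz cs st i j k * st (cs.simple (rr i j k)) ↔
      zz cs st i j (k + 1) = zz cs st i j k := by
    rw [zz_succ]
    constructor
    · intro h
      rw [h, mul_assoc, ← map_mul]
      simp
    · intro h
      have h2 := eq_mul_inv_of_mul_eq h
      rwa [hss] at h2
  rw [h1]
  rcases Nat.mod_two_eq_zero_or_one k with h | h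
  · rw [zz_even cs st hst_inv i j hij h, zz_odd cs st hst_inv i j hij (by omega),
      eq_inv_iff_mul_eq_one, ← pow_add]
    rw [show k + 1 + k = 2 * k + 1 by ring]
  · rw [zz_odd cs st hst_inv i j hij h, zz_even cs st hst_inv i j hij (by omega),
      inv_eq_iff_mul_eq_one, ← pow_add]
    rw [show k + 1 + k = 2 * k + 1 by ring]

lemma qq_high_even (i j : B) (n k : ℕ) (ha : (cs.simple i * cs.simple j) ^ n = 1) (hk : k ≤ n) :
    cs.length (qq cs i j (2 * k)) = cs.length (qq cs i j (2 * (n - k))) := by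
  rw [qq_even, qq_even, ← cs.length_inv]
  congr 1
  rw [inv_eq_iff_mul_eq_one, ← pow_add, Nat.add_sub_cancel' hk, ha]

lemma qq_high_odd (st : W ≃* W) (hst_inv : ∀ w, st (st w) = w)
    (hst_S : ∀ i : B, ∃ j : B, st (cs.simple i) = cs.simple j) (i j : B)
    (hij : st (cs.simple i) = cs.simple j) (n k : ℕ)
    (ha : (cs.simple i * cs.simple j) ^ n = 1) (hk : k < n) :
    cs.length (qq cs i j (2 * k + 1)) = cs.length (qq cs i j (2 * (n - k - 1) + 1)) := by
  obtain ⟨d, rfl⟩ : ∃ d, n = k + (d + 1) := ⟨n - k - 1, by omega⟩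
  rw [show k + (d + 1) - k - 1 = d by omega, qq_odd, qq_odd,
    ← length_st cs st hst_inv hst_S (_ ^ d * _), map_mul, st_a cs st hst_inv i j hij, hij,
    ← dih_right (cs.simple_mul_simple_self i) (cs.simple_mul_simple_self j)]
  rw [pow_add] at ha
  rw [eq_inv_of_mul_eq_one_left ha, ← dih_left (cs.simple_mul_simple_self i)
    (cs.simple_mul_simple_self j), pow_succ', ← mul_assoc, ← mul_assoc,
    CoxeterSystem.simple_mul_simple_self, one_mul]

/-- `w` lies in the parabolic subgroup generated by `i, j` -/
def JH (i j : B) (w : W) : Prop :=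
  ∃ κ : List B, (∀ k ∈ κ, k ∈ ({i, j} : Set B)) ∧ cs.wordProd κ = w

lemma JH_mul {i j : B} {w w' : W} (h : JH cs i j w) (h' : JH cs i j w') : JH cs i j (w * w') := by
  obtain ⟨κ, h1, rfl⟩ := h
  obtain ⟨κ', h2, rfl⟩ := h'
  refine ⟨κ ++ κ', ?_, by rw [CoxeterSystem.wordProd_append]⟩
  intro k hk
  rw [List.mem_append] at hk
  exact hk.elim (h1 k) (h2 k)

lemma JH_inv {i j : B} {w : W} (h : JH cs i j w) : JH cs i j w⁻¹ := by
  obtain ⟨κ, h1, rfl⟩ := h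
  exact ⟨κ.reverse, fun k hk => h1 k (by simpa using hk), by rw [CoxeterSystem.wordProd_reverse]⟩

lemma JH_rr (i j : B) (k : ℕ) : JH cs i j (cs.simple (rr i j k)) := by
  refine ⟨[rr i j k], ?_, by simp⟩
  intro l hl
  simp at hl
  rw [hl, rr]
  split_ifs <;> simp

lemma JH_qq (i j : B) (k : ℕ) : JH cs i j (qq cs i j k) := by
  induction k with
  | zero => exact ⟨[], by simp, by simp [qq]⟩
  | succ k ih => exact JH_mul cs ih (JH_rr cs i j k)

lemma JH_st_qq (st : W ≃* W) (hst_inv : ∀ w, st (st w) = w) (i j : B)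
    (hij : st (cs.simple i) = cs.simple j) (k : ℕ) : JH cs i j (st (qq cs i j k)) := by
  induction k with
  | zero => exact ⟨[], by simp, by simp [qq]⟩
  | succ k ih =>
    rw [qq_succ, map_mul, st_rr cs st hst_inv i j hij]
    exact JH_mul cs ih (JH_rr cs i j (k + 1))

lemma JH_zz (st : W ≃* W) (hst_inv : ∀ w, st (st w) = w) (i j : B)
    (hij : st (cs.simple i) = cs.simple j) (k : ℕ) : JH cs i j (zz cs st i j k) :=
  JH_mul cs (JH_inv cs (JH_qq cs i j k)) (JH_st_qq cs st hst_inv i j hij k)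

lemma low_supp (st : W ≃* W) (hst_inv : ∀ w, st (st w) = w)
    (hst_S : ∀ i : B, ∃ j : B, st (cs.simple i) = cs.simple j)
    (P : {z : W // st z = z⁻¹} → W → Polynomial ℤ) (hP : XRec cs st P)
    (i j : B) (hij : st (cs.simple i) = cs.simple j) (y : W) (n : ℕ)
    (hdesc : ∀ k < n, cs.length (y * qq cs i j (k + 1)) < cs.length (y * qq cs i j k))
    (hv : ∀ l ∈ ({i, j} : Set B), cs.length (y * qq cs i j n) <
      cs.length (y * qq cs i j n * cs.simple l))
    (hvv : st (y * qq cs i j n) = y * qq cs i j n) (d : ℕ) :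
    d ≤ n → ∀ (z : W) (hz : st z = z⁻¹), JH cs i j z → P ⟨z, hz⟩ (y * qq cs i j (n - d)) ≠ 0 →
      cs.length z ≤ 2 * d := by
  induction d with
  | zero =>
    intro _ z hz hJ hne
    rw [Nat.sub_zero] at hne
    have h1 : z = 1 := by
      by_contra hz1
      rcases supp_len cs st hst_inv hst_S P hP _ z hz hne with h | h
      · obtain ⟨κ, h2, h3⟩ := JH_inv cs hJ
        have h4 := min_coset cs _ _ hv κ h2 (by rw [h3]; simpa using hz1)
        rw [hvv, ← cs.length_inv, mul_inv_rev, inv_inv] at h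
        rw [h3] at h4
        omega
      · rw [hvv] at h
        simp at h
        exact hz1 h
    simp [h1]
  | succ d ih =>
    intro hd z hz hJ hne
    have hk : n - d = n - (d + 1) + 1 := by omega
    have ih' := ih (by omega)
    rw [hk] at ih'
    set k := n - (d + 1) with hkdef
    have hq : y * qq cs i j k * cs.simple (rr i j k) = y * qq cs i j (k + 1) := by
      rw [qq_succ, mul_assoc]
    have hs := step cs st hst_inv P hP (rr i j k) _ (by rw [hq]; exact hdesc k (by omega)) z hz hne
    rw [hq] at hs
    have hJr := JH_rr cs i j k
    have hJr' : JH cs i j (st (cs.simple (rr i j k))) := by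
      rw [st_rr cs st hst_inv i j hij]; exact JH_rr cs i j (k + 1)
    rcases hs with ⟨-, h⟩ | ⟨-, h, h'⟩ | ⟨h, h'⟩ | ⟨-, h⟩
    · have := ih' z hz hJ h
      omega
    · have h1 := ih' _ h (JH_mul cs hJr hJ) h'
      have := cs.length_simple_mul z (rr i j k)
      omega
    · have h1 := ih' _ h (JH_mul cs (JH_mul cs hJr hJ) hJr') h'
      have := cs.length_simple_mul z (rr i j k)
      rw [st_rr cs st hst_inv i j hij] at h1
      have := cs.length_mul_simple (cs.simple (rr i j k) * z) (rr i j (k + 1))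
      omega
    · have := ih' z hz hJ h
      omega

lemma dihedral_case (st : W ≃* W) (hst_inv : ∀ w, st (st w) = w)
    (hst_S : ∀ i : B, ∃ j : B, st (cs.simple i) = cs.simple j)
    (P : {z : W // st z = z⁻¹} → W → Polynomial ℤ) (hP : XRec cs st P)
    (h1 : st (1 : W) = (1 : W)⁻¹)
    (i j : B) (hij : st (cs.simple i) = cs.simple j) (y : W) (hy : st y = y)
    (hi : cs.length (y * cs.simple i) < cs.length y)
    (IH : ∀ v : W, cs.length v < cs.length y → st v = v → P ⟨1, h1⟩ v = X ^ cs.length v) :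
    P ⟨1, h1⟩ y = X ^ cs.length y := by
  have hls := length_st cs st hst_inv hst_S
  have hex : ∃ k, ¬ cs.length (y * qq cs i j (k + 1)) < cs.length (y * qq cs i j k) := by
    by_contra hcon
    push Not at hcon
    have : ∀ k, cs.length (y * qq cs i j k) + k ≤ cs.length y := by
      intro k
      induction k with
      | zero => simp [qq]
      | succ k ih => have := hcon k; omega
    have := this (cs.length y + 1)
    omega
  obtain ⟨n, hn, hdesc⟩ : ∃ n, ¬ cs.length (y * qq cs i j (n + 1)) < cs.length (y * qq cs i j n) ∧
      ∀ k < n, cs.length (y * qq cs i j (k + 1)) < cs.length (y * qq cs i j k) :=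
    ⟨Nat.find hex, Nat.find_spec hex, fun k hk => by simpa using Nat.find_min hex hk⟩
  clear hex
  have hmulr : ∀ k, y * qq cs i j k * cs.simple (rr i j k) = y * qq cs i j (k + 1) := by
    intro k; rw [qq_succ, mul_assoc]
  have hn0 : 0 < n := by
    rcases Nat.eq_zero_or_pos n with h | h
    · exfalso
      subst h
      apply hn
      simpa [qq, rr] using hi
    · exact h
  have hylen : ∀ k ≤ n, cs.length (y * qq cs i j k) + k = cs.length y := by
    intro k
    induction k with
    | zero => simp [qq]
    | succ k ih =>
      intro hk
      have h2 := ih (by omega)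
      have h3 := hdesc k (by omega)
      have h4 := cs.length_mul_simple (y * qq cs i j k) (rr i j k)
      rw [hmulr] at h4
      omega
  have hqlen : ∀ k ≤ n, cs.length (qq cs i j k) = k := by
    intro k hk
    have h2 := length_qq_le cs i j k
    have h3 := cs.length_le_length_mul_add_right y (qq cs i j k)
    have h4 := hylen k hk
    omega
  -- minimality of v
  have hvn : cs.length (y * qq cs i j n) < cs.length (y * qq cs i j n * cs.simple (rr i j n)) := by
    rw [hmulr]
    have h4 := cs.length_mul_simple (y * qq cs i j n) (rr i j n)
    rw [hmulr] at h4
    omega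
  have hback : ∀ k, y * qq cs i j (k + 1) * cs.simple (rr i j k) = y * qq cs i j k := by
    intro k; rw [← hmulr]; simp
  have hvn' : cs.length (y * qq cs i j n) <
      cs.length (y * qq cs i j n * cs.simple (rr i j (n - 1))) := by
    obtain ⟨m, rfl⟩ : ∃ m, n = m + 1 := ⟨n - 1, by omega⟩
    rw [Nat.add_sub_cancel, hback]
    exact hdesc m (by omega)
  have hv : ∀ l ∈ ({i, j} : Set B), cs.length (y * qq cs i j n) <
      cs.length (y * qq cs i j n * cs.simple l) := by
    intro l hl
    simp only [Set.mem_insert_iff, Set.mem_singleton_iff] at hl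
    rcases Nat.mod_two_eq_zero_or_one n with h | h
    · rw [rr_even i j h] at hvn
      rw [rr_odd i j (by omega)] at hvn'
      rcases hl with rfl | rfl <;> assumption
    · rw [rr_odd i j h] at hvn
      rw [rr_even i j (by omega)] at hvn'
      rcases hl with rfl | rfl <;> assumption
  have hstv : st (y * qq cs i j n) = y * qq cs i j n * zz cs st i j n := by
    rw [map_mul, hy, zz]; group
  have hzn : zz cs st i j n = 1 := by
    by_contra hne
    obtain ⟨κ, k1, k2⟩ := JH_zz cs st hst_inv i j hij n
    have h2 := min_coset cs _ _ hv κ k1 (by rw [k2]; exact hne)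
    rw [k2, ← hstv, hls] at h2
    omega
  have hvv : st (y * qq cs i j n) = y * qq cs i j n := by rw [hstv, hzn, mul_one]
  have han : (cs.simple i * cs.simple j) ^ n = 1 := (zz_eq_one cs st hst_inv i j hij n).1 hzn
  have ham : ∀ m, 0 < m → m < n → (cs.simple i * cs.simple j) ^ m ≠ 1 := by
    intro m hm0 hmn ha
    have hzm := (zz_eq_one cs st hst_inv i j hij m).2 ha
    have hstm : st (y * qq cs i j m) = y * qq cs i j m := by
      have : st (y * qq cs i j m) = y * qq cs i j m * zz cs st i j m := by
        rw [map_mul, hy, zz]; group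
      rw [this, hzm, mul_one]
    obtain ⟨m, rfl⟩ : ∃ m', m = m' + 1 := ⟨m - 1, by omega⟩
    have h2 := hdesc (m + 1) hmn
    have h3 := hdesc m (by omega)
    rw [← hback m, ← hls (_ * cs.simple (rr i j m)), map_mul, hstm,
      st_rr cs st hst_inv i j hij, hmulr] at h3
    omega
  have hlow := low_supp cs st hst_inv hst_S P hP i j hij y n hdesc hv hvv
  have main : ∀ d ≤ n, P ⟨zz cs st i j (n - d), zz_tw cs st hst_inv i j _⟩ (y * qq cs i j (n - d)) =
      X ^ (cs.length (y * qq cs i j n) + min n (2 * d)) := by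
    intro d
    induction d with
    | zero =>
      intro _
      have h2 : (⟨zz cs st i j (n - 0), zz_tw cs st hst_inv i j _⟩ : {z : W // st z = z⁻¹}) =
        ⟨1, h1⟩ := Subtype.ext hzn
      rw [h2, Nat.sub_zero, IH _ _ hvv]
      · simp
      · have := hylen n le_rfl
        omega
    | succ d ih =>
      intro hd
      have ih' := ih (by omega)
      have hlow' := hlow d (by omega)
      obtain ⟨k, hk⟩ : ∃ k, k = n - (d + 1) := ⟨_, rfl⟩
      have hk1 : n - d = k + 1 := by omega
      rw [hk1] at ih' hlow'
      rw [← hk]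
      obtain ⟨r1, r2, r3, r4⟩ := hP.2 (rr i j k) (y * qq cs i j k)
        (by rw [hmulr]; exact hdesc k (by omega)) ⟨zz cs st i j k, zz_tw cs st hst_inv i j _⟩
      simp only [hmulr] at r1 r2 r3 r4
      have hl0 := zz_len cs st hst_inv i j hij k
      have hl1 := rzz_len cs st hst_inv hst_S i j hij k
      have hcomm := zz_comm cs st hst_inv i j hij k
      have hzs := zz_succ cs st i j k
      have hconj := tw_conj cs st hst_inv (rr i j k) (zz cs st i j k) (zz_tw cs st hst_inv i j _)
      have hsub : (⟨_, hconj⟩ : {z : W // st z = z⁻¹}) =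
        ⟨zz cs st i j (k + 1), zz_tw cs st hst_inv i j _⟩ := Subtype.ext hzs.symm
      rcases lt_trichotomy (2 * k + 1) n with h | h | h
      · have hnc := mt hcomm.1 (ham _ (by omega) h)
        rw [hqlen _ (by omega)] at hl0 hl1
        rw [r3 hnc (by omega) hconj, hsub, ih']
        congr 2
        omega
      · have hc := hcomm.2 (by rw [h]; exact han)
        rw [hqlen _ (by omega)] at hl0 hl1
        have htw := tw_comm cs st (rr i j k) (zz cs st i j k) (zz_tw cs st hst_inv i j _) hc
        have hzero : P ⟨cs.simple (rr i j k) * zz cs st i j k, htw⟩ (y * qq cs i j (k + 1)) = 0 := by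
          by_contra hne
          have := hlow' _ htw (JH_mul cs (JH_rr cs i j k) (JH_zz cs st hst_inv i j hij k)) hne
          omega
        have hsame : (⟨zz cs st i j (k + 1), zz_tw cs st hst_inv i j _⟩ : {z : W // st z = z⁻¹}) =
          ⟨zz cs st i j k, zz_tw cs st hst_inv i j _⟩ := by
          apply Subtype.ext
          change zz cs st i j (k + 1) = zz cs st i j k
          rw [hzs, hc, mul_assoc, ← map_mul]
          simp
        rw [hsame] at ih'
        rw [r1 hc (by omega) htw, hzero, ih', mul_zero, add_zero, ← pow_succ']
        congr 1
        omega
      · have ha2 : (cs.simple i * cs.simple j) ^ (2 * k + 1) ≠ 1 := by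
          have h2 : 2 * k + 1 = n + (2 * k + 1 - n) := by omega
          rw [h2, pow_add, han, one_mul]
          exact ham _ (by omega) (by omega)
        have hnc := mt hcomm.1 ha2
        rw [qq_high_even cs i j n k han (by omega), hqlen _ (by omega)] at hl0
        rw [qq_high_odd cs st hst_inv hst_S i j hij n k han (by omega), hqlen _ (by omega)] at hl1
        have hzero : P ⟨zz cs st i j k, zz_tw cs st hst_inv i j _⟩ (y * qq cs i j (k + 1)) = 0 := by
          by_contra hne
          have := hlow' _ _ (JH_zz cs st hst_inv i j hij k) hne
          omega
        rw [r4 hnc (by omega) hconj, hsub, ih', hzero, mul_zero, zero_add, ← pow_add]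
        congr 1
        omega
  have hfin := main n le_rfl
  have h2 : (⟨zz cs st i j (n - n), zz_tw cs st hst_inv i j _⟩ : {z : W // st z = z⁻¹}) =
    ⟨1, h1⟩ := Subtype.ext (by simp [zz, qq])
  rw [h2, Nat.sub_self] at hfin
  have h3 := hylen n le_rfl
  rw [show y * qq cs i j 0 = y by simp [qq]] at hfin
  rw [hfin]
  congr 1
  omega

lemma main_aux (st : W ≃* W) (hst_inv : ∀ w, st (st w) = w)
    (hst_S : ∀ i : B, ∃ j : B, st (cs.simple i) = cs.simple j)
    (P : {z : W // st z = z⁻¹} → W → Polynomial ℤ) (hP : XRec cs st P)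
    (h1 : st (1 : W) = (1 : W)⁻¹) (N : ℕ) :
    ∀ y : W, cs.length y = N → st y = y → P ⟨1, h1⟩ y = X ^ cs.length y := by
  induction N using Nat.strong_induction_on with
  | _ N IH =>
    intro y hyN hy
    by_cases hy1 : y = 1
    · subst hy1
      rw [hP.1]; simp
    obtain ⟨i, hi⟩ := cs.exists_rightDescent_of_ne_one hy1
    have hi' : cs.length (y * cs.simple i) < cs.length y := hi
    have IH' : ∀ v : W, cs.length v < cs.length y → st v = v → P ⟨1, h1⟩ v = X ^ cs.length v :=
      fun v hv hv' => IH _ (by omega) v rfl hv'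
    obtain ⟨j, hij⟩ := hst_S i
    by_cases hc : st (cs.simple i) = cs.simple i
    · have hcc : cs.simple i * 1 = 1 * st (cs.simple i) := by rw [hc]; simp
      have htw := tw_comm cs st i 1 h1 hcc
      obtain ⟨r1, -, -, -⟩ := hP.2 i y hi' ⟨1, h1⟩
      have hst' : st (y * cs.simple i) = y * cs.simple i := by rw [map_mul, hy, hc]
      have hzero : P ⟨cs.simple i * 1, htw⟩ (y * cs.simple i) = 0 := by
        by_contra hne
        rcases supp_len cs st hst_inv hst_S P hP _ _ htw hne with h | h
        · rw [hst', ← cs.length_inv] at h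
          simp at h
          omega
        · rw [hst'] at h
          have h3 := cs.length_simple i
          rw [inv_mul_cancel, mul_one] at h
          rw [h] at h3
          simp at h3
      have hlen := cs.length_mul_simple y i
      rw [r1 hcc (by simp) htw, hzero, IH' _ hi' hst', mul_zero, add_zero, ← pow_succ']
      congr 1
      omega
    · exact dihedral_case cs st hst_inv hst_S P hP h1 i j hij y hy hi' IH'

end LV

/-- **Proposition 1.8.** For any `y ∈ W`, `X^1_y = δ_{y,y*} u^{l(y)}`. -/
theorem statement14 {B W : Type} [Group W] [Finite B] {M : CoxeterMatrix B}
    (cs : CoxeterSystem M W) (st : W ≃* W)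
    (hst_inv : ∀ w, st (st w) = w)
    (hst_S : ∀ i : B, ∃ j : B, st (cs.simple i) = cs.simple j)
    (P : {z : W // st z = z⁻¹} → W → Polynomial ℤ) (hP : XRec cs st P)
    (h1 : st (1 : W) = (1 : W)⁻¹) (y : W) :
    P ⟨1, h1⟩ y = if st y = y then X ^ cs.length y else 0 := by
  split_ifs with h
  · exact LV.main_aux cs st hst_inv hst_S P hP h1 _ y rfl h
  · by_contra hne
    rcases LV.supp_len cs st hst_inv hst_S P hP y 1 h1 hne with h' | h'
    · rw [one_mul, CoxeterSystem.length_inv, LV.length_st cs st hst_inv hst_S] at h'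
      omega
    · exact h (eq_of_inv_mul_eq_one h'.symm).symm
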